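/- Let f(u) = C₁u⁴ + C₂u³ + C₃u² + C₄u + C₅ be a quartic polynomial with real coefficients and let u(t,x) be a smooth real-valued solution of the gKN equation with f, such that u_x(t,x) ≠ 0 for all (t,x). Let T₁, X₁ and T₂ₐ, X₂ₐ be the conserved density–flux pairs T₁ = (1/2)·u_xx²/u_x² + (1/3)·f(u)/u_x², X₁ = −u_xxxx·u_xx/u_x² + (1/2)·u_xxx²/u_x² + (2/3)·u_xxx·(3u_xx² + f(u))/u_x³ − (9/8)·u_xx⁴/u_x⁴ + (1/2)·u_xx²·f(u)/u_x⁴ − u_xx·f'(u)/u_x² + (1/6)·f(u)²/u_x⁴, T₂ₐ = (1/2)·u_xxx²/u_x² − (3/8)·u_xx⁴/u_x⁴ + (5/6)·u_xx²·f(u)/u_x⁴ + (1/18)·f(u)²/u_x⁴ − (5/9)·f''(u), and X₂ₐ = −u_xxxxx·u_xxx/u_x² + (1/2)·u_xxxx²/u_x² + u_xxxx·u_xxx·u_xx/u_x³ + (1/6)·u_xxxx·u_xx·(9u_xx² − 10f(u))/u_x⁴ + 3·u_xxx³/u_x³ − (2/3)·u_xxx²·(9u_xx² − 2f(u))/u_x⁴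 + (1/9)·u_xxx·(15u_xx² + 2f(u))·f(u)/u_x⁵ + (5/3)·u_xxx·u_xx·f'(u)/u_x³ + (9/8)·u_xx⁶/u_x⁶ − (29/12)·u_xx⁴·f(u)/u_x⁶ − (1/6)·u_xx³·f'(u)/u_x⁴ + (19/18)·u_xx²·f(u)²/u_x⁶ − (5/6)·u_xx²·f''(u)/u_x² − (5/9)·u_xx·f(u)·f'(u)/u_x⁴ − (4/9)·u_xx·f'''(u) + (1/27)·f(u)³/u_x⁶ + (5/18)·(2f(u)f''(u) − f'(u)²)/u_x² + (2/9)·u_x²·f''''(u). Define T₃ₐ(t,x) = 3t·T₂ₐ(t,x) − x·T₁(t,x) and X₃ₐ(t,x) = 3t·X₂ₐ(t,x) − x·X₁(t,x) − u_xxx·u_xx/u_x² + (2/3)·u_xx·f(u)/u_x³ + (5/3)·f'(u)/u_x. Then ∂_t T₃ₐ(t,x) + ∂_x X₃ₐ(t,x) = 0 at every point (t,x). (T₃ₐ is a local conserved density of the Krichever–Novikov equation that depends explicitly on t and x.) -/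

import Mathlib

open Real

/-- Partial derivative with respect to the second (spatial) variable. -/
noncomputable def pdx (u : ℝ → ℝ → ℝ) : ℝ → ℝ → ℝ := fun t x => deriv (fun y => u t y) x

/-- Partial derivative with respect to the first (time) variable. -/
noncomputable def pdt (u : ℝ → ℝ → ℝ) : ℝ → ℝ → ℝ := fun t x => deriv (fun s => u s x) t

/-- `u` solves the generalized Krichever-Novikov equation with nonlinearity `f`:
`u_t = u_xxx - (3/2) u_xx^2/u_x + f(u)/u_x`. -/
def isGKN (f : ℝ → ℝ) (u : ℝ → ℝ → ℝ) : Prop :=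
  ∀ t x, pdt u t x =
    pdx (pdx (pdx u)) t x - (3/2) * (pdx (pdx u) t x)^2 / pdx u t x + f (u t x) / pdx u t x

/-- A conservation law: `∂_t T + ∂_x X = 0` at every point. -/
def consLaw (T X : ℝ → ℝ → ℝ) : Prop := ∀ t x, pdt T t x + pdx X t x = 0

/-- The conserved density `T₁ = (1/2) u_xx²/u_x² + (1/3) f(u)/u_x²`. -/
noncomputable def T1 (f : ℝ → ℝ) (u : ℝ → ℝ → ℝ) : ℝ → ℝ → ℝ := fun t x =>
  (1/2) * (pdx (pdx u) t x)^2 / (pdx u t x)^2 + (1/3) * f (u t x) / (pdx u t x)^2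

/-- The flux `X₁` corresponding to `T₁`. -/
noncomputable def X1 (f : ℝ → ℝ) (u : ℝ → ℝ → ℝ) : ℝ → ℝ → ℝ := fun t x =>
  -((pdx (pdx (pdx (pdx u))) t x) * (pdx (pdx u) t x) / (pdx u t x)^2) + (1/2) * (pdx (pdx (pdx u)) t x)^2 / (pdx u t x)^2
    + (2/3) * (pdx (pdx (pdx u)) t x) * (3 * (pdx (pdx u) t x)^2 + f (u t x)) / (pdx u t x)^3
    - (9/8) * (pdx (pdx u) t x)^4 / (pdx u t x)^4 + (1/2) * (pdx (pdx u) t x)^2 * (f (u t x)) / (pdx u t x)^4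
    - (pdx (pdx u) t x) * (deriv f (u t x)) / (pdx u t x)^2 + (1/6) * (f (u t x))^2 / (pdx u t x)^4

/-- The conserved density `T₂ₐ`. -/
noncomputable def T2a (f : ℝ → ℝ) (u : ℝ → ℝ → ℝ) : ℝ → ℝ → ℝ := fun t x =>
  (1/2) * (pdx (pdx (pdx u)) t x)^2 / (pdx u t x)^2 - (3/8) * (pdx (pdx u) t x)^4 / (pdx u t x)^4
    + (5/6) * (pdx (pdx u) t x)^2 * (f (u t x)) / (pdx u t x)^4 + (1/18) * (f (u t x))^2 / (pdx u t x)^4 - (5/9) * (deriv (deriv f) (u t x))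

/-- The flux `X₂ₐ` corresponding to `T₂ₐ`. -/
noncomputable def X2a (f : ℝ → ℝ) (u : ℝ → ℝ → ℝ) : ℝ → ℝ → ℝ := fun t x =>
  -((pdx (pdx (pdx (pdx (pdx u)))) t x) * (pdx (pdx (pdx u)) t x) / (pdx u t x)^2) + (1/2) * (pdx (pdx (pdx (pdx u))) t x)^2 / (pdx u t x)^2
    + (pdx (pdx (pdx (pdx u))) t x) * (pdx (pdx (pdx u)) t x) * (pdx (pdx u) t x) / (pdx u t x)^3
    + (1/6) * (pdx (pdx (pdx (pdx u))) t x) * (pdx (pdx u) t x) * (9 * (pdx (pdx u) t x)^2 - 10 * (f (u t x))) / (pdx u t x)^4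
    + 3 * (pdx (pdx (pdx u)) t x)^3 / (pdx u t x)^3
    - (2/3) * (pdx (pdx (pdx u)) t x)^2 * (9 * (pdx (pdx u) t x)^2 - 2 * (f (u t x))) / (pdx u t x)^4
    + (1/9) * (pdx (pdx (pdx u)) t x) * (15 * (pdx (pdx u) t x)^2 + 2 * (f (u t x))) * (f (u t x)) / (pdx u t x)^5
    + (5/3) * (pdx (pdx (pdx u)) t x) * (pdx (pdx u) t x) * (deriv f (u t x)) / (pdx u t x)^3
    + (9/8) * (pdx (pdx u) t x)^6 / (pdx u t x)^6 - (29/12) * (pdx (pdx u) t x)^4 * (f (u t x)) / (pdx u t x)^6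
    - (1/6) * (pdx (pdx u) t x)^3 * (deriv f (u t x)) / (pdx u t x)^4
    + (19/18) * (pdx (pdx u) t x)^2 * (f (u t x))^2 / (pdx u t x)^6
    - (5/6) * (pdx (pdx u) t x)^2 * (deriv (deriv f) (u t x)) / (pdx u t x)^2
    - (5/9) * (pdx (pdx u) t x) * (f (u t x)) * (deriv f (u t x)) / (pdx u t x)^4
    - (4/9) * (pdx (pdx u) t x) * (deriv (deriv (deriv f)) (u t x)) + (1/27) * (f (u t x))^3 / (pdx u t x)^6
    + (5/18) * (2 * (f (u t x)) * (deriv (deriv f) (u t x)) - (deriv f (u t x))^2) / (pdx u t x)^2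
    + (2/9) * (pdx u t x)^2 * (deriv (deriv (deriv (deriv f))) (u t x))

/-- The conserved density `T₃ₐ = 3t·T₂ₐ - x·T₁`, depending explicitly on `t,x`. -/
noncomputable def T3a (f : ℝ → ℝ) (u : ℝ → ℝ → ℝ) : ℝ → ℝ → ℝ := fun t x =>
  3 * t * T2a f u t x - x * T1 f u t x

/-- The flux `X₃ₐ` corresponding to `T₃ₐ`. -/
noncomputable def X3a (f : ℝ → ℝ) (u : ℝ → ℝ → ℝ) : ℝ → ℝ → ℝ := fun t x =>
  3 * t * X2a f u t x - x * X1 f u t x - (pdx (pdx (pdx u)) t x) * (pdx (pdx u) t x) / (pdx u t x)^2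
    + (2/3) * (pdx (pdx u) t x) * (f (u t x)) / (pdx u t x)^3 + (5/3) * (deriv f (u t x)) / (pdx u t x)

theorem hasDerivAt_snd_fderiv {u : ℝ → ℝ → ℝ} (hu : Differentiable ℝ (Function.uncurry u))
    (t x : ℝ) :
    HasDerivAt (fun y => u t y) (fderiv ℝ (Function.uncurry u) (t, x) (0, 1)) x :=
  (hu (t, x)).hasFDerivAt.comp_hasDerivAt x ((hasDerivAt_const x t).prodMk (hasDerivAt_id' x))

theorem hasDerivAt_fst_fderiv {u : ℝ → ℝ → ℝ} (hu : Differentiable ℝ (Function.uncurry u))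
    (t x : ℝ) :
    HasDerivAt (fun s => u s x) (fderiv ℝ (Function.uncurry u) (t, x) (1, 0)) t :=
  HasFDerivAt.comp_hasDerivAt (l := Function.uncurry u) t (hu (t, x)).hasFDerivAt
    ((hasDerivAt_id' t).prodMk (hasDerivAt_const t x))

theorem uncurry_pdx_eq_fderiv {u : ℝ → ℝ → ℝ} (hu : Differentiable ℝ (Function.uncurry u)) :
    Function.uncurry (pdx u) = fun p => fderiv ℝ (Function.uncurry u) p (0, 1) :=
  funext fun p => (hasDerivAt_snd_fderiv hu p.1 p.2).deriv

theorem uncurry_pdt_eq_fderiv {u : ℝ → ℝ → ℝ} (hu : Differentiable ℝ (Function.uncurry u)) :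
    Function.uncurry (pdt u) = fun p => fderiv ℝ (Function.uncurry u) p (1, 0) :=
  funext fun p => (hasDerivAt_fst_fderiv hu p.1 p.2).deriv

theorem hasDerivAt_pdx {u : ℝ → ℝ → ℝ} (hu : ContDiff ℝ (⊤ : ℕ∞) (Function.uncurry u))
    (t x : ℝ) : HasDerivAt (fun y => u t y) (pdx u t x) x :=
  (hasDerivAt_snd_fderiv (hu.differentiable (by simp)) t x).differentiableAt.hasDerivAt

theorem hasDerivAt_pdt {u : ℝ → ℝ → ℝ} (hu : ContDiff ℝ (⊤ : ℕ∞) (Function.uncurry u))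
    (t x : ℝ) : HasDerivAt (fun s => u s x) (pdt u t x) t :=
  (hasDerivAt_fst_fderiv (hu.differentiable (by simp)) t x).differentiableAt.hasDerivAt

theorem contDiff_pdx {u : ℝ → ℝ → ℝ} (hu : ContDiff ℝ (⊤ : ℕ∞) (Function.uncurry u)) :
    ContDiff ℝ (⊤ : ℕ∞) (Function.uncurry (pdx u)) := by
  rw [uncurry_pdx_eq_fderiv (hu.differentiable (by simp))]
  exact (hu.fderiv_right (by simp)).clm_apply contDiff_const

theorem contDiff_pdt {u : ℝ → ℝ → ℝ} (hu : ContDiff ℝ (⊤ : ℕ∞) (Function.uncurry u)) :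
    ContDiff ℝ (⊤ : ℕ∞) (Function.uncurry (pdt u)) := by
  rw [uncurry_pdt_eq_fderiv (hu.differentiable (by simp))]
  exact (hu.fderiv_right (by simp)).clm_apply contDiff_const

/-- Partial derivatives of a smooth function commute. -/
theorem pdt_pdx_comm {u : ℝ → ℝ → ℝ} (hu : ContDiff ℝ (⊤ : ℕ∞) (Function.uncurry u)) :
    pdt (pdx u) = pdx (pdt u) := by
  have hd : Differentiable ℝ (Function.uncurry u) := hu.differentiable (by simp)
  have hd' : Differentiable ℝ (fderiv ℝ (Function.uncurry u)) :=
    (hu.fderiv_right (m := (⊤ : ℕ∞)) (by simp)).differentiable (by simp)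
  funext t x
  have h₁ := (hasDerivAt_fst_fderiv ((contDiff_pdx hu).differentiable (by simp)) t x).deriv
  have h₂ := (hasDerivAt_snd_fderiv ((contDiff_pdt hu).differentiable (by simp)) t x).deriv
  rw [uncurry_pdx_eq_fderiv hd, fderiv_clm_apply (hd' _) (differentiableAt_const _)] at h₁
  rw [uncurry_pdt_eq_fderiv hd, fderiv_clm_apply (hd' _) (differentiableAt_const _)] at h₂
  have hsymm := second_derivative_symmetric (fun p => (hd p).hasFDerivAt)
    (hd' (t, x)).hasFDerivAt (1, 0) (0, 1)
  simp at h₁ h₂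
  exact h₁.trans (hsymm.trans h₂.symm)

/-- The chain rule along a spatial slice. -/
theorem hasDerivAt_comp_pdx {g : ℝ → ℝ} (hg : ContDiff ℝ (⊤ : ℕ∞) g) {u : ℝ → ℝ → ℝ}
    (hu : ContDiff ℝ (⊤ : ℕ∞) (Function.uncurry u)) (t x : ℝ) :
    HasDerivAt (fun y => g (u t y)) (deriv g (u t x) * pdx u t x) x :=
  ((hg.differentiable (by simp)) (u t x)).hasDerivAt.comp x (hasDerivAt_pdx hu t x)

/-- The chain rule along a temporal slice. -/
theorem hasDerivAt_comp_pdt {g : ℝ → ℝ} (hg : ContDiff ℝ (⊤ : ℕ∞) g) {u : ℝ → ℝ → ℝ}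
    (hu : ContDiff ℝ (⊤ : ℕ∞) (Function.uncurry u)) (t x : ℝ) :
    HasDerivAt (fun s => g (u s x)) (deriv g (u t x) * pdt u t x) t :=
  ((hg.differentiable (by simp)) (u t x)).hasDerivAt.comp t (hasDerivAt_pdt hu t x)

theorem contDiff_deriv {g : ℝ → ℝ} (hg : ContDiff ℝ (⊤ : ℕ∞) g) :
    ContDiff ℝ (⊤ : ℕ∞) (deriv g) :=
  (contDiff_infty_iff_deriv.1 hg).2

section Evolution

variable {f : ℝ → ℝ} {u : ℝ → ℝ → ℝ}

/-- Evolution of `u_x` along the gKN equation. -/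
theorem pdt_pdx_of_isGKN (hf : ContDiff ℝ (⊤ : ℕ∞) f)
    (hu : ContDiff ℝ (⊤ : ℕ∞) (Function.uncurry u)) (hux : ∀ t x, pdx u t x ≠ 0)
    (hsol : isGKN f u) (t x : ℝ) :
    pdt (pdx u) t x = pdx (pdx (pdx (pdx u))) t x
      - 3 * pdx (pdx u) t x * pdx (pdx (pdx u)) t x / pdx u t x
      + (3/2) * (pdx (pdx u) t x)^3 / (pdx u t x)^2
      + deriv f (u t x) - f (u t x) * pdx (pdx u) t x / (pdx u t x)^2 := by
  have hu₁ := contDiff_pdx hu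
  have hu₂ := contDiff_pdx hu₁
  have hu₃ := contDiff_pdx hu₂
  have d₁ := hasDerivAt_pdx hu₁ t x
  have d₂ := hasDerivAt_pdx hu₂ t x
  have d₃ := hasDerivAt_pdx hu₃ t x
  have e₀ := hasDerivAt_comp_pdx hf hu t x
  have hne := hux t x
  rw [pdt_pdx_comm hu, show pdt u = _ from funext₂ hsol]
  have key := (d₃.sub (((d₂.pow 2).const_mul (3/2)).div d₁ hne)).add (e₀.div d₁ hne)
  refine key.deriv.trans ?_
  simp only [Pi.pow_apply]
  field_simp
  ring

/-- Evolution of `u_xx` along the gKN equation. -/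
theorem pdt_pdx_pdx_of_isGKN (hf : ContDiff ℝ (⊤ : ℕ∞) f)
    (hu : ContDiff ℝ (⊤ : ℕ∞) (Function.uncurry u)) (hux : ∀ t x, pdx u t x ≠ 0)
    (hsol : isGKN f u) (t x : ℝ) :
    pdt (pdx (pdx u)) t x = pdx (pdx (pdx (pdx (pdx u)))) t x
      - 3 * pdx (pdx u) t x * pdx (pdx (pdx (pdx u))) t x / pdx u t x
      - 3 * (pdx (pdx (pdx u)) t x)^2 / pdx u t x
      + (15/2) * (pdx (pdx u) t x)^2 * pdx (pdx (pdx u)) t x / (pdx u t x)^2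
      - 3 * (pdx (pdx u) t x)^4 / (pdx u t x)^3
      + deriv (deriv f) (u t x) * pdx u t x
      - deriv f (u t x) * pdx (pdx u) t x / pdx u t x
      - f (u t x) * pdx (pdx (pdx u)) t x / (pdx u t x)^2
      + 2 * f (u t x) * (pdx (pdx u) t x)^2 / (pdx u t x)^3 := by
  have hu₁ := contDiff_pdx hu
  have hu₂ := contDiff_pdx hu₁
  have hu₃ := contDiff_pdx hu₂
  have hu₄ := contDiff_pdx hu₃
  have d₁ := hasDerivAt_pdx hu₁ t x
  have d₂ := hasDerivAt_pdx hu₂ t x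
  have d₃ := hasDerivAt_pdx hu₃ t x
  have d₄ := hasDerivAt_pdx hu₄ t x
  have e₀ := hasDerivAt_comp_pdx hf hu t x
  have e₁ := hasDerivAt_comp_pdx (contDiff_deriv hf) hu t x
  have hne := hux t x
  have hne2 := pow_ne_zero 2 hne
  rw [pdt_pdx_comm hu₁, show pdt (pdx u) = _ from funext₂ (pdt_pdx_of_isGKN hf hu hux hsol)]
  have key := (((d₄.sub (((d₂.const_mul 3).mul d₃).div d₁ hne)).add
    (((d₂.pow 3).const_mul (3/2)).div (d₁.pow 2) hne2)).add e₁).sub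
    ((e₀.mul d₂).div (d₁.pow 2) hne2)
  refine key.deriv.trans ?_
  simp only [Pi.pow_apply, Pi.mul_apply]
  field_simp
  ring

/-- Evolution of `u_xxx` along the gKN equation. -/
theorem pdt_pdx_pdx_pdx_of_isGKN (hf : ContDiff ℝ (⊤ : ℕ∞) f)
    (hu : ContDiff ℝ (⊤ : ℕ∞) (Function.uncurry u)) (hux : ∀ t x, pdx u t x ≠ 0)
    (hsol : isGKN f u) (t x : ℝ) :
    pdt (pdx (pdx (pdx u))) t x = pdx (pdx (pdx (pdx (pdx (pdx u))))) t x
      - 3 * pdx (pdx u) t x * pdx (pdx (pdx (pdx (pdx u)))) t x / pdx u t x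
      - 9 * pdx (pdx (pdx u)) t x * pdx (pdx (pdx (pdx u))) t x / pdx u t x
      + (21/2) * (pdx (pdx u) t x)^2 * pdx (pdx (pdx (pdx u))) t x / (pdx u t x)^2
      + 18 * pdx (pdx u) t x * (pdx (pdx (pdx u)) t x)^2 / (pdx u t x)^2
      - 27 * (pdx (pdx u) t x)^3 * pdx (pdx (pdx u)) t x / (pdx u t x)^3
      + 9 * (pdx (pdx u) t x)^5 / (pdx u t x)^4
      + deriv (deriv (deriv f)) (u t x) * (pdx u t x)^2
      - 2 * deriv f (u t x) * pdx (pdx (pdx u)) t x / pdx u t x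
      + 3 * deriv f (u t x) * (pdx (pdx u) t x)^2 / (pdx u t x)^2
      - f (u t x) * pdx (pdx (pdx (pdx u))) t x / (pdx u t x)^2
      + 6 * f (u t x) * pdx (pdx u) t x * pdx (pdx (pdx u)) t x / (pdx u t x)^3
      - 6 * f (u t x) * (pdx (pdx u) t x)^3 / (pdx u t x)^4 := by
  have hu₁ := contDiff_pdx hu
  have hu₂ := contDiff_pdx hu₁
  have hu₃ := contDiff_pdx hu₂
  have hu₄ := contDiff_pdx hu₃
  have hu₅ := contDiff_pdx hu₄
  have d₁ := hasDerivAt_pdx hu₁ t x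
  have d₂ := hasDerivAt_pdx hu₂ t x
  have d₃ := hasDerivAt_pdx hu₃ t x
  have d₄ := hasDerivAt_pdx hu₄ t x
  have d₅ := hasDerivAt_pdx hu₅ t x
  have e₀ := hasDerivAt_comp_pdx hf hu t x
  have e₁ := hasDerivAt_comp_pdx (contDiff_deriv hf) hu t x
  have e₂ := hasDerivAt_comp_pdx (contDiff_deriv (contDiff_deriv hf)) hu t x
  have hne := hux t x
  have hne2 := pow_ne_zero 2 hne
  have hne3 := pow_ne_zero 3 hne
  rw [pdt_pdx_comm hu₂,
    show pdt (pdx (pdx u)) = _ from funext₂ (pdt_pdx_pdx_of_isGKN hf hu hux hsol)]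
  have key := ((((((((d₅.sub (((d₂.const_mul 3).mul d₄).div d₁ hne)).sub
    (((d₃.pow 2).const_mul 3).div d₁ hne)).add
    ((((d₂.pow 2).const_mul (15/2)).mul d₃).div (d₁.pow 2) hne2)).sub
    (((d₂.pow 4).const_mul 3).div (d₁.pow 3) hne3)).add
    (e₂.mul d₁)).sub
    ((e₁.mul d₂).div d₁ hne)).sub
    ((e₀.mul d₃).div (d₁.pow 2) hne2)).add
    (((e₀.const_mul 2).mul (d₂.pow 2)).div (d₁.pow 3) hne3))
  refine key.deriv.trans ?_
  simp only [Pi.pow_apply, Pi.mul_apply]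
  field_simp
  ring

/-- `(T₁, X₁)` is a conservation law of the gKN equation. -/
theorem exists_hasDerivAt_T1_X1 (hf : ContDiff ℝ (⊤ : ℕ∞) f)
    (hu : ContDiff ℝ (⊤ : ℕ∞) (Function.uncurry u)) (hux : ∀ t x, pdx u t x ≠ 0)
    (hsol : isGKN f u) (t x : ℝ) :
    ∃ d, HasDerivAt (fun s => T1 f u s x) d t ∧ HasDerivAt (fun y => X1 f u t y) (-d) x := by
  have hu₁ := contDiff_pdx hu
  have hu₂ := contDiff_pdx hu₁
  have hu₃ := contDiff_pdx hu₂
  have hu₄ := contDiff_pdx hu₃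
  have d₁ := hasDerivAt_pdx hu₁ t x
  have d₂ := hasDerivAt_pdx hu₂ t x
  have d₃ := hasDerivAt_pdx hu₃ t x
  have d₄ := hasDerivAt_pdx hu₄ t x
  have e₀ := hasDerivAt_comp_pdx hf hu t x
  have e₁ := hasDerivAt_comp_pdx (contDiff_deriv hf) hu t x
  have t₁ := hasDerivAt_pdt hu₁ t x
  have t₂ := hasDerivAt_pdt hu₂ t x
  have s₀ := hasDerivAt_comp_pdt hf hu t x
  have hne := hux t x
  have hne2 := pow_ne_zero 2 hne
  have hne3 := pow_ne_zero 3 hne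
  have hne4 := pow_ne_zero 4 hne
  refine ⟨_, (((t₂.pow 2).const_mul (1/2)).div (t₁.pow 2) hne2).add
    ((s₀.const_mul (1/3)).div (t₁.pow 2) hne2), ?_⟩
  have key := ((((((((d₄.mul d₂).div (d₁.pow 2) hne2).neg).add
    (((d₃.pow 2).const_mul (1/2)).div (d₁.pow 2) hne2)).add
    (((d₃.const_mul (2/3)).mul (((d₂.pow 2).const_mul 3).add e₀)).div (d₁.pow 3) hne3)).sub
    (((d₂.pow 4).const_mul (9/8)).div (d₁.pow 4) hne4)).add
    ((((d₂.pow 2).const_mul (1/2)).mul e₀).div (d₁.pow 4) hne4)).sub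
    ((d₂.mul e₁).div (d₁.pow 2) hne2)).add
    (((e₀.pow 2).const_mul (1/6)).div (d₁.pow 4) hne4)
  refine HasDerivAt.congr_deriv key ?_
  rw [hsol t x, pdt_pdx_of_isGKN hf hu hux hsol, pdt_pdx_pdx_of_isGKN hf hu hux hsol]
  simp only [Pi.pow_apply, Pi.mul_apply, Pi.add_apply]
  field_simp
  ring

/-- `(T₂ₐ, X₂ₐ)` is a conservation law of the gKN equation when `f⁗` is constant. -/
theorem exists_hasDerivAt_T2a_X2a (hf : ContDiff ℝ (⊤ : ℕ∞) f)
    (hf5 : ∀ v, deriv (deriv (deriv (deriv (deriv f)))) v = 0)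
    (hu : ContDiff ℝ (⊤ : ℕ∞) (Function.uncurry u)) (hux : ∀ t x, pdx u t x ≠ 0)
    (hsol : isGKN f u) (t x : ℝ) :
    ∃ d, HasDerivAt (fun s => T2a f u s x) d t ∧ HasDerivAt (fun y => X2a f u t y) (-d) x := by
  have hf₁ := contDiff_deriv hf
  have hf₂ := contDiff_deriv hf₁
  have hf₃ := contDiff_deriv hf₂
  have hu₁ := contDiff_pdx hu
  have hu₂ := contDiff_pdx hu₁
  have hu₃ := contDiff_pdx hu₂
  have hu₄ := contDiff_pdx hu₃
  have d₁ := hasDerivAt_pdx hu₁ t x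
  have d₂ := hasDerivAt_pdx hu₂ t x
  have d₃ := hasDerivAt_pdx hu₃ t x
  have d₄ := hasDerivAt_pdx hu₄ t x
  have d₅ := hasDerivAt_pdx (contDiff_pdx hu₄) t x
  have e₀ := hasDerivAt_comp_pdx hf hu t x
  have e₁ := hasDerivAt_comp_pdx hf₁ hu t x
  have e₂ := hasDerivAt_comp_pdx hf₂ hu t x
  have e₃ := hasDerivAt_comp_pdx hf₃ hu t x
  have e₄ := hasDerivAt_comp_pdx (contDiff_deriv hf₃) hu t x
  have t₁ := hasDerivAt_pdt hu₁ t x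
  have t₂ := hasDerivAt_pdt hu₂ t x
  have t₃ := hasDerivAt_pdt hu₃ t x
  have s₀ := hasDerivAt_comp_pdt hf hu t x
  have s₂ := hasDerivAt_comp_pdt hf₂ hu t x
  have hne := hux t x
  have hne2 := pow_ne_zero 2 hne
  have hne3 := pow_ne_zero 3 hne
  have hne4 := pow_ne_zero 4 hne
  have hne5 := pow_ne_zero 5 hne
  have hne6 := pow_ne_zero 6 hne
  refine ⟨_, (((((t₃.pow 2).const_mul (1/2)).div (t₁.pow 2) hne2).sub
    (((t₂.pow 4).const_mul (3/8)).div (t₁.pow 4) hne4)).add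
    ((((t₂.pow 2).const_mul (5/6)).mul s₀).div (t₁.pow 4) hne4)).add
    (((s₀.pow 2).const_mul (1/18)).div (t₁.pow 4) hne4) |>.sub (s₂.const_mul (5/9)), ?_⟩
  have key := ((d₅.mul d₃).div (d₁.pow 2) hne2).neg
    |>.add (((d₄.pow 2).const_mul (1/2)).div (d₁.pow 2) hne2)
    |>.add (((d₄.mul d₃).mul d₂).div (d₁.pow 3) hne3)
    |>.add ((((d₄.const_mul (1/6)).mul d₂).mul
      (((d₂.pow 2).const_mul 9).sub (e₀.const_mul 10))).div (d₁.pow 4) hne4)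
    |>.add (((d₃.pow 3).const_mul 3).div (d₁.pow 3) hne3)
    |>.sub ((((d₃.pow 2).const_mul (2/3)).mul
      (((d₂.pow 2).const_mul 9).sub (e₀.const_mul 2))).div (d₁.pow 4) hne4)
    |>.add ((((d₃.const_mul (1/9)).mul
      (((d₂.pow 2).const_mul 15).add (e₀.const_mul 2))).mul e₀).div (d₁.pow 5) hne5)
    |>.add ((((d₃.const_mul (5/3)).mul d₂).mul e₁).div (d₁.pow 3) hne3)
    |>.add (((d₂.pow 6).const_mul (9/8)).div (d₁.pow 6) hne6)
    |>.sub ((((d₂.pow 4).const_mul (29/12)).mul e₀).div (d₁.pow 6) hne6)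
    |>.sub ((((d₂.pow 3).const_mul (1/6)).mul e₁).div (d₁.pow 4) hne4)
    |>.add ((((d₂.pow 2).const_mul (19/18)).mul (e₀.pow 2)).div (d₁.pow 6) hne6)
    |>.sub ((((d₂.pow 2).const_mul (5/6)).mul e₂).div (d₁.pow 2) hne2)
    |>.sub ((((d₂.const_mul (5/9)).mul e₀).mul e₁).div (d₁.pow 4) hne4)
    |>.sub ((d₂.const_mul (4/9)).mul e₃)
    |>.add (((e₀.pow 3).const_mul (1/27)).div (d₁.pow 6) hne6)
    |>.add (((((e₀.const_mul 2).mul e₂).sub (e₁.pow 2)).const_mul (5/18)).div (d₁.pow 2) hne2)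
    |>.add (((d₁.pow 2).const_mul (2/9)).mul e₄)
  refine HasDerivAt.congr_deriv key ?_
  rw [hsol t x, pdt_pdx_of_isGKN hf hu hux hsol, pdt_pdx_pdx_of_isGKN hf hu hux hsol,
    pdt_pdx_pdx_pdx_of_isGKN hf hu hux hsol, hf5]
  simp only [Pi.pow_apply, Pi.mul_apply, Pi.add_apply, Pi.sub_apply]
  field_simp
  ring

/-- `X₁ - 3 T₂ₐ` is the total spatial derivative of the correction term in `X₃ₐ`. -/
theorem hasDerivAt_X3a_correction (hf : ContDiff ℝ (⊤ : ℕ∞) f)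
    (hu : ContDiff ℝ (⊤ : ℕ∞) (Function.uncurry u)) (hux : ∀ t x, pdx u t x ≠ 0) (t x : ℝ) :
    HasDerivAt (fun y => -(pdx (pdx (pdx u)) t y * pdx (pdx u) t y / (pdx u t y)^2)
      + (2/3) * pdx (pdx u) t y * f (u t y) / (pdx u t y)^3
      + (5/3) * deriv f (u t y) / pdx u t y) (X1 f u t x - 3 * T2a f u t x) x := by
  have hu₁ := contDiff_pdx hu
  have hu₂ := contDiff_pdx hu₁
  have d₁ := hasDerivAt_pdx hu₁ t x
  have d₂ := hasDerivAt_pdx hu₂ t x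
  have d₃ := hasDerivAt_pdx (contDiff_pdx hu₂) t x
  have e₀ := hasDerivAt_comp_pdx hf hu t x
  have e₁ := hasDerivAt_comp_pdx (contDiff_deriv hf) hu t x
  have hne := hux t x
  have key := (((d₃.mul d₂).div (d₁.pow 2) (pow_ne_zero 2 hne)).neg.add
    (((d₂.const_mul (2/3)).mul e₀).div (d₁.pow 3) (pow_ne_zero 3 hne))).add
    ((e₁.const_mul (5/3)).div d₁ hne)
  refine HasDerivAt.congr_deriv key ?_
  simp only [Pi.pow_apply, Pi.mul_apply, X1, T2a]
  field_simp
  ring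

end Evolution

/-- The fifth derivative of a quartic polynomial function vanishes. -/
theorem deriv_five_quartic (C₁ C₂ C₃ C₄ C₅ v : ℝ) :
    deriv (deriv (deriv (deriv (deriv
      fun v : ℝ => C₁ * v^4 + C₂ * v^3 + C₃ * v^2 + C₄ * v + C₅)))) v = 0 := by
  have h (a b c d e : ℝ) : deriv (fun v : ℝ => a * v^4 + b * v^3 + c * v^2 + d * v + e)
      = fun v => 0 * v^4 + (4 * a) * v^3 + (3 * b) * v^2 + (2 * c) * v + d := by
    funext v
    have key := (((((hasDerivAt_pow 4 v).const_mul a).add ((hasDerivAt_pow 3 v).const_mul b)).add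
      ((hasDerivAt_pow 2 v).const_mul c)).add ((hasDerivAt_id v).const_mul d)).add_const e
    refine key.deriv.trans ?_
    norm_num
    ring
  simp only [h]
  ring

/-- `(T₃ₐ, X₃ₐ)` with `T₃ₐ = 3t·T₂ₐ - x·T₁` is a conservation law of the
KN equation (quartic `f`) whose density depends explicitly on `t` and `x`. -/
theorem KN_conservation_law_T3a (C₁ C₂ C₃ C₄ C₅ : ℝ) (f : ℝ → ℝ)
    (hf : ∀ v, f v = C₁ * v^4 + C₂ * v^3 + C₃ * v^2 + C₄ * v + C₅)
    (u : ℝ → ℝ → ℝ) (hu : ContDiff ℝ (⊤ : ℕ∞) (Function.uncurry u))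
    (hux : ∀ t x, pdx u t x ≠ 0)
    (hsol : isGKN f u) :
    consLaw (T3a f u) (X3a f u) := by
  have hf_eq : f = fun v => C₁ * v^4 + C₂ * v^3 + C₃ * v^2 + C₄ * v + C₅ := funext hf
  have hfs : ContDiff ℝ (⊤ : ℕ∞) f := by
    rw [hf_eq]
    fun_prop
  have hf5 : ∀ v, deriv (deriv (deriv (deriv (deriv f)))) v = 0 := by
    rw [hf_eq]
    exact deriv_five_quartic C₁ C₂ C₃ C₄ C₅
  intro t x
  obtain ⟨d, hT1, hX1⟩ := exists_hasDerivAt_T1_X1 hfs hu hux hsol t x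
  obtain ⟨e, hT2, hX2⟩ := exists_hasDerivAt_T2a_X2a hfs hf5 hu hux hsol t x
  have hT := (((hasDerivAt_id t).const_mul 3).mul hT2).sub (hT1.const_mul x)
  have hX := ((hX2.const_mul (3 * t)).sub ((hasDerivAt_id x).mul hX1)).add
    (hasDerivAt_X3a_correction hfs hu hux t x)
  have hT' : pdt (T3a f u) t x = _ := hT.deriv
  have hX' : pdx (X3a f u) t x = _ :=
    (hX.congr_of_eventuallyEq (Filter.Eventually.of_forall fun y => by
      simp only [X3a, Pi.add_apply, Pi.sub_apply, Pi.mul_apply, id]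
      ring)).deriv
  rw [hT', hX']
  simp only [id]
  ring
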